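/- arXiv:2109.02756 — 2 statements merged into one kernel-verified Lean document; each statement's English description precedes it below -/
import Mathlib

section
/- Let P ∈ ℝ^{n×n} be symmetric positive semidefinite, q ∈ ℝⁿ, H ∈ ℝ^{m×n}, g ∈ ℝᵐ, D ⊆ ℝⁿ nonempty closed convex, K ⊆ ℝᵐ a nonempty closed convex cone with polar cone K°, and α > 0. Let the sequence {w^j, z^j, v^j} be generated by the PIPG iteration: w^{j+1} = π_{K°}[v^j + α(H z^j − g)], z^{j+1} = π_D[z^j − α(P z^j + q + Hᵀ w^{j+1})], v^{j+1} = w^{j+1} + α H(z^{j+1} − z^j). Let λ ≥ ‖P‖. Then for all j ≥ 3, d(−P z^j − q − Hᵀ w^j | N_D(z^j)) ≤ (1/α + λ)‖z^j − z^{j−1}‖. -/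
open scoped RealInnerProductSpace
open Filter Topology Metric ContinuousLinearMap

/-- Projection onto a set: the unique nearest point, when it exists
(it exists and is unique for nonempty closed convex sets in Euclidean space). -/
noncomputable def proj {E : Type*} [NormedAddCommGroup E] [InnerProductSpace ℝ E]
    (S : Set E) (x : E) : E :=
  open Classical in
  if h : ∃ y, y ∈ S ∧ ∀ z ∈ S, ‖x - y‖ ≤ ‖x - z‖ then h.choose else 0

/-- The polar cone `K° = {w | ⟪w, y⟫ ≤ 0 for all y ∈ K}`. -/
def polarCone {E : Type*} [NormedAddCommGroup E] [InnerProductSpace ℝ E]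
    (K : Set E) : Set E := {w | ∀ y ∈ K, ⟪w, y⟫ ≤ 0}

/-- The recession cone `rec D = {y | y + z ∈ D for all z ∈ D}`. -/
def recCone {E : Type*} [NormedAddCommGroup E] (D : Set E) : Set E :=
  {y | ∀ z ∈ D, y + z ∈ D}

/-- The normal cone of `D` at `z`: `N_D(z) = {y | ⟪y, z' - z⟫ ≤ 0 for all z' ∈ D}`. -/
def normalCone {E : Type*} [NormedAddCommGroup E] [InnerProductSpace ℝ E]
    (D : Set E) (z : E) : Set E := {y | ∀ z' ∈ D, ⟪y, z' - z⟫ ≤ 0}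

/-!
The projection residual `x - z'` of a projected step `z' = π_D[x]` is normal to `D` at `z'`, and so
are its nonnegative multiples. For the forward step `x = z - α (F z + u)`, dividing the residual by
`α` gives the normal vector `α⁻¹ (z - z') - F z - u`. It differs from the optimality residual
`-F z' - u` by `α⁻¹ (z' - z) - (F z' - F z)`, whose norm is at most `(1/α + lam) ‖z' - z‖` when `F`
is `lam`-Lipschitz. In the `j`-th PIPG step, `F = P` and `u = q + Hᵀ w^{j+1}`.
-/

theorem norm_sub_eq_iInf_iff {E : Type*} [SeminormedAddCommGroup E] {D : Set E} {x p : E}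
    (hp : p ∈ D) : (‖x - p‖ = ⨅ z : D, ‖x - z‖) ↔ ∀ z ∈ D, ‖x - p‖ ≤ ‖x - z‖ := by
  have : Nonempty D := ⟨⟨p, hp⟩⟩
  have hbdd : BddBelow (Set.range fun z : D => ‖x - z‖) :=
    ⟨0, Set.forall_mem_range.2 fun _ => norm_nonneg _⟩
  exact ⟨fun hinf z hz => hinf.trans_le (ciInf_le hbdd ⟨z, hz⟩),
    fun hmin => le_antisymm (le_ciInf fun z => hmin z z.2) (ciInf_le hbdd ⟨p, hp⟩)⟩

section Projection

variable {E : Type*} [NormedAddCommGroup E] [InnerProductSpace ℝ E] {D : Set E}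

theorem smul_mem_normalCone {y z : E} {c : ℝ} (hc : 0 ≤ c) (hy : y ∈ normalCone D z) :
    c • y ∈ normalCone D z := fun z' hz' => by
  rw [real_inner_smul_left]
  exact mul_nonpos_of_nonneg_of_nonpos hc (hy z' hz')

theorem sub_mem_normalCone_of_forall_norm_sub_le (hconv : Convex ℝ D) {x p : E} (hp : p ∈ D)
    (hmin : ∀ z ∈ D, ‖x - p‖ ≤ ‖x - z‖) : x - p ∈ normalCone D p :=
  (norm_eq_iInf_iff_real_inner_le_zero hconv hp).1 ((norm_sub_eq_iInf_iff hp).2 hmin)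

theorem exists_mem_forall_norm_sub_le (hne : D.Nonempty) (hcomp : IsComplete D)
    (hconv : Convex ℝ D) (x : E) : ∃ p ∈ D, ∀ z ∈ D, ‖x - p‖ ≤ ‖x - z‖ :=
  have ⟨p, hp, hinf⟩ := exists_norm_eq_iInf_of_complete_convex hne hcomp hconv x
  ⟨p, hp, (norm_sub_eq_iInf_iff hp).1 hinf⟩

theorem proj_mem_and_forall_norm_sub_le {x : E} (h : ∃ p ∈ D, ∀ z ∈ D, ‖x - p‖ ≤ ‖x - z‖) :
    proj D x ∈ D ∧ ∀ z ∈ D, ‖x - proj D x‖ ≤ ‖x - z‖ := by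
  rw [_root_.proj, dif_pos h]
  exact h.choose_spec

theorem sub_proj_mem_normalCone (hne : D.Nonempty) (hcomp : IsComplete D) (hconv : Convex ℝ D)
    (x : E) : x - proj D x ∈ normalCone D (proj D x) :=
  have ⟨hmem, hmin⟩ :=
    proj_mem_and_forall_norm_sub_le (exists_mem_forall_norm_sub_le hne hcomp hconv x)
  sub_mem_normalCone_of_forall_norm_sub_le hconv hmem hmin

theorem infDist_normalCone_proj_le (hne : D.Nonempty) (hcomp : IsComplete D) (hconv : Convex ℝ D)
    {c : ℝ} (hc : 0 ≤ c) (x y : E) :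
    infDist y (normalCone D (proj D x)) ≤ ‖y - c • (x - proj D x)‖ := by
  rw [← dist_eq_norm]
  exact infDist_le_dist_of_mem
    (smul_mem_normalCone hc (sub_proj_mem_normalCone hne hcomp hconv x))

end Projection

theorem stmt2_general {E : Type*} [NormedAddCommGroup E] [InnerProductSpace ℝ E]
    {D : Set E} (hne : D.Nonempty) (hcomp : IsComplete D) (hconv : Convex ℝ D)
    {F : E → E} {lam : NNReal} (hF : LipschitzWith lam F) {α : ℝ} (hα : 0 < α)
    {u z z' : E} (hz' : z' = proj D (z - α • (F z + u))) :
    infDist (-F z' - u) (normalCone D z') ≤ (1 / α + lam) * ‖z' - z‖ := by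
  have hresidual : -F z' - u - α⁻¹ • (z - α • (F z + u) - z') =
      α⁻¹ • (z' - z) - (F z' - F z) := by
    rw [smul_sub, smul_sub, inv_smul_smul₀ hα.ne', smul_sub]
    abel
  calc infDist (-F z' - u) (normalCone D z')
      ≤ ‖-F z' - u - α⁻¹ • (z - α • (F z + u) - z')‖ :=
        hz' ▸ infDist_normalCone_proj_le hne hcomp hconv (inv_nonneg.2 hα.le) _ _
    _ = ‖α⁻¹ • (z' - z) - (F z' - F z)‖ := by rw [hresidual]
    _ ≤ ‖α⁻¹ • (z' - z)‖ + ‖F z' - F z‖ := norm_sub_le _ _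
    _ ≤ α⁻¹ * ‖z' - z‖ + lam * ‖z' - z‖ := by
        rw [norm_smul_of_nonneg (inv_nonneg.2 hα.le)]
        gcongr
        exact hF.norm_sub_le z' z
    _ = (1 / α + lam) * ‖z' - z‖ := by rw [one_div, add_mul]

/-- distance bound for the primal optimality residual of PIPG. -/
theorem stmt2 {n m : ℕ} (α : ℝ) (hα0 : 0 < α)
    (P : EuclideanSpace ℝ (Fin n) →L[ℝ] EuclideanSpace ℝ (Fin n))
    (hPsa : IsSelfAdjoint P) (hPpsd : ∀ x, 0 ≤ ⟪P x, x⟫)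
    (q : EuclideanSpace ℝ (Fin n))
    (H : EuclideanSpace ℝ (Fin n) →L[ℝ] EuclideanSpace ℝ (Fin m))
    (g : EuclideanSpace ℝ (Fin m))
    (D : Set (EuclideanSpace ℝ (Fin n)))
    (hDne : D.Nonempty) (hDcl : IsClosed D) (hDconv : Convex ℝ D)
    (K : Set (EuclideanSpace ℝ (Fin m)))
    (hKne : K.Nonempty) (hKcl : IsClosed K) (hKconv : Convex ℝ K)
    (hKcone : ∀ w ∈ K, ∀ a : ℝ, 0 ≤ a → a • w ∈ K)
    (w v : ℕ → EuclideanSpace ℝ (Fin m))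
    (z : ℕ → EuclideanSpace ℝ (Fin n))
    (hw : ∀ j : ℕ, w (j + 1) = proj (polarCone K) (v j + α • (H (z j) - g)))
    (hz : ∀ j : ℕ, z (j + 1) =
      proj D (z j - α • (P (z j) + q + (ContinuousLinearMap.adjoint H) (w (j + 1)))))
    (hv : ∀ j : ℕ, v (j + 1) = w (j + 1) + α • H (z (j + 1) - z j))
    (lam : ℝ) (hlam : ‖P‖ ≤ lam) :
    ∀ j : ℕ, 3 ≤ j →
      Metric.infDist (-(P (z j)) - q - (ContinuousLinearMap.adjoint H) (w j))
          (normalCone D (z j))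
        ≤ (1/α + lam) * ‖z j - z (j - 1)‖ := by
  lift lam to NNReal using (norm_nonneg P).trans hlam
  exact fun
    | k + 1, _ => by
      simpa only [sub_sub, Nat.add_sub_cancel] using stmt2_general hDne hDcl.isComplete hDconv
        (P.lipschitz.weaken hlam) hα0 ((hz k).trans (by rw [add_assoc]))
end

section
/- Let P ∈ ℝ^{n×n} be symmetric positive semidefinite, q ∈ ℝⁿ, H ∈ ℝ^{m×n}, g ∈ ℝᵐ, D ⊆ ℝⁿ nonempty closed convex, K ⊆ ℝᵐ a nonempty closed convex cone with polar cone K°. Suppose the step size α satisfies 0 < α ≤ (8 − 4/γ)/(√(λ² + 16ν²) + λ) for some γ ∈ (1/2, 1), λ ≥ ‖P‖, ν ≥ ‖H‖. Let the sequence {w^j, z^j, v^j} be generated by the PIPG iteration: w^{j+1} = π_{K°}[v^j + α(H z^j − g)], z^{j+1} = π_D[z^j − α(P z^j + q + Hᵀ w^{j+1})], v^{j+1} = w^{j+1} + α H(z^{j+1} − z^j). Then there exist z̄ ∈ rec D and w̄ ∈ K° such that lim_{j→∞}(z^j − z^{j−1}) = z̄ and lim_{j→∞}(w^j − w^{j−1})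 = w̄; furthermore H z̄ ∈ K, P z̄ = 0, ⟨q, z̄⟩ = −(1/α)‖z̄‖², and σ_D(−Hᵀ w̄) + ⟨g, w̄⟩ = −(1/α)‖w̄‖². -/
open scoped RealInnerProductSpace
open Filter Topology Metric ContinuousLinearMap

/-!
In the product space, PIPG iterates the map `(z n, w n) ↦ (z (n + 1), w (n + 1))`, where `w` is read
one step ahead. Monotonicity of the normal cones together with the step size bound makes this map
averaged for the semi-inner product `‖z‖² + ‖w‖² - 2 α ⟪H z, w⟫`, which dominates a multiple of the
Euclidean one.

The increments `x (n + 1) - x n` of an averaged orbit are Cauchy: their norms decrease to some `ρ`,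
and averagedness gives `(x (n + 2) - x (n + 1)) - (x (n + 1) - x n) → 0`, so that
`k ρ ≤ ‖x (n + k) - x n‖` for all `k`. Summing `‖x (M + 1) - x (m + 1)‖² ≤ ‖x M - x m‖²` over `M`,
at the indices `m` and `0`, and comparing the quadratic growth of the two sides bounds
`‖(x 1 - x 0) + (x (m + 1) - x m)‖` from below; the parallelogram law turns this into
`‖(x 1 - x 0) - (x (m + 1) - x m)‖² ≤ 8 (‖x 1 - x 0‖² - ρ²)`, and the same holds for every shift of
the orbit.

The properties of the limits `z̄`, `w̄` come from dividing the optimality conditions of the two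
projections by `n`. With `A = ‖z̄‖² + α ⟪q, z̄⟫` and `B = ‖w̄‖² + α ⟪g, w̄⟫`, one finds `0 ≤ A`,
`α σ_D(-Hᵀ w̄) ≤ -A - B` and `-B ≤ α σ_D(-Hᵀ w̄)`, which forces `A = 0` and `α σ_D(-Hᵀ w̄) = -B`.
-/

section Increments

variable {V : Type*} [SeminormedAddCommGroup V] {x : ℕ → V}

lemma norm_sub_add_le_of_nonexpansive (hx : ∀ i j, ‖x (i + 1) - x (j + 1)‖ ≤ ‖x i - x j‖)
    (i j k : ℕ) : ‖x (i + k) - x (j + k)‖ ≤ ‖x i - x j‖ := by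
  induction k with
  | zero => rfl
  | succ k ih => exact (hx _ _).trans ih

lemma norm_sub_zero_le_of_nonexpansive (hx : ∀ i j, ‖x (i + 1) - x (j + 1)‖ ≤ ‖x i - x j‖)
    (k : ℕ) : ‖x k - x 0‖ ≤ k * ‖x 1 - x 0‖ := by
  have hstep : ∀ i, dist (x i) (x (i + 1)) ≤ ‖x 1 - x 0‖ := fun i ↦ by
    simpa only [dist_eq_norm', zero_add, add_comm 1] using
      norm_sub_add_le_of_nonexpansive hx 1 0 i
  simpa [dist_eq_norm'] using dist_le_range_sum_of_dist_le k fun {i} _ ↦ hstep i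

lemma two_mul_norm_sum_sub_zero_le (hx : ∀ i j, ‖x (i + 1) - x (j + 1)‖ ≤ ‖x i - x j‖) (M : ℕ) :
    2 * ‖∑ i ∈ Finset.range M, (x (i + 1) - x 0)‖ ≤ M * (M + 1) * ‖x 1 - x 0‖ := by
  induction M with
  | zero => simp
  | succ M ih =>
    have htri := norm_add_le (∑ i ∈ Finset.range M, (x (i + 1) - x 0)) (x (M + 1) - x 0)
    have hlast := norm_sub_zero_le_of_nonexpansive hx (M + 1)
    rw [Finset.sum_range_succ]
    push_cast at hlast ⊢
    linarith

lemma tendsto_sub_sub_smul [NormedSpace ℝ V]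
    (hreg : Tendsto (fun n ↦ (x (n + 1 + 1) - x (n + 1)) - (x (n + 1) - x n)) atTop (𝓝 0))
    (k : ℕ) :
    Tendsto (fun n ↦ (x (n + k) - x n) - (k : ℝ) • (x (n + 1) - x n)) atTop (𝓝 0) := by
  induction k with
  | zero => simpa using tendsto_const_nhds
  | succ k ih =>
    have hstep := (ih.comp (tendsto_add_atTop_nat 1)).add (hreg.const_smul (k : ℝ))
    rw [smul_zero, add_zero] at hstep
    refine hstep.congr fun n ↦ ?_
    rw [Function.comp_apply, add_right_comm n 1 k, add_assoc n k 1]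
    push_cast
    module

lemma mul_le_norm_add_sub [NormedSpace ℝ V]
    (hx : ∀ i j, ‖x (i + 1) - x (j + 1)‖ ≤ ‖x i - x j‖)
    (hreg : Tendsto (fun n ↦ (x (n + 1 + 1) - x (n + 1)) - (x (n + 1) - x n)) atTop (𝓝 0))
    {ρ : ℝ} (hlim : Tendsto (fun n ↦ ‖x (n + 1) - x n‖) atTop (𝓝 ρ)) (n k : ℕ) :
    k * ρ ≤ ‖x (n + k) - x n‖ := by
  have hanti : Antitone fun n ↦ ‖x (n + k) - x n‖ := antitone_nat_of_succ_le fun n ↦ by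
    simpa only [add_right_comm] using hx (n + k) n
  have hlow : Tendsto (fun n ↦ k * ‖x (n + 1) - x n‖ -
      ‖(x (n + k) - x n) - (k : ℝ) • (x (n + 1) - x n)‖) atTop (𝓝 (k * ρ)) := by
    simpa using (hlim.const_mul (k : ℝ)).sub (tendsto_sub_sub_smul hreg k).norm
  refine le_of_tendsto hlow ((eventually_ge_atTop n).mono fun i hi ↦ ?_)
  have hmono : ‖x (i + k) - x i‖ ≤ ‖x (n + k) - x n‖ := hanti hi
  have htri := norm_sub_norm_le ((k : ℝ) • (x (i + 1) - x i)) (x (i + k) - x i)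
  rw [norm_sub_rev ((k : ℝ) • (x (i + 1) - x i)), norm_smul, Real.norm_natCast] at htri
  linarith

variable [InnerProductSpace ℝ V]

lemma sq_norm_add_mul_le_inner_sum (hx : ∀ i j, ‖x (i + 1) - x (j + 1)‖ ≤ ‖x i - x j‖)
    (m M : ℕ) :
    ‖x M - x 0‖ ^ 2 + M * (‖x (m + 1) - x 0‖ ^ 2 - ‖x m - x 0‖ ^ 2) ≤
      2 * ⟪∑ i ∈ Finset.range M, (x (i + 1) - x 0), x (m + 1) - x m⟫ +
        2 * ⟪x M - x 0, x m - x 0⟫ := by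
  induction M with
  | zero => simp
  | succ M ih =>
    have hsq := pow_le_pow_left₀ (norm_nonneg _) (hx M m) 2
    rw [← sub_sub_sub_cancel_right (x (M + 1)) _ (x 0),
      ← sub_sub_sub_cancel_right (x M) _ (x 0), norm_sub_sq_real (x (M + 1) - x 0),
      norm_sub_sq_real (x M - x 0)] at hsq
    have hinner : ⟪x (M + 1) - x 0, x (m + 1) - x m⟫ =
        ⟪x (M + 1) - x 0, x (m + 1) - x 0⟫ - ⟪x (M + 1) - x 0, x m - x 0⟫ := by
      rw [← inner_sub_right, sub_sub_sub_cancel_right]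
    rw [Finset.sum_range_succ, inner_add_left, hinner]
    push_cast
    linarith

lemma exists_sq_sub_mul_le_inner_sum (hx : ∀ i j, ‖x (i + 1) - x (j + 1)‖ ≤ ‖x i - x j‖)
    {ρ : ℝ} (hρ : 0 ≤ ρ) (hspeed : ∀ k : ℕ, k * ρ ≤ ‖x k - x 0‖) (m : ℕ) :
    ∃ C : ℝ, ∀ M : ℕ, (M * ρ) ^ 2 - C * M ≤
      2 * ⟪∑ i ∈ Finset.range M, (x (i + 1) - x 0), x (m + 1) - x m⟫ := by
  refine ⟨2 * ‖x 1 - x 0‖ * ‖x m - x 0‖ -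
    (‖x (m + 1) - x 0‖ ^ 2 - ‖x m - x 0‖ ^ 2), fun M ↦ ?_⟩
  have hlow : (M * ρ) ^ 2 ≤ ‖x M - x 0‖ ^ 2 := pow_le_pow_left₀ (by positivity) (hspeed M) 2
  have hcross : ⟪x M - x 0, x m - x 0⟫ ≤ M * ‖x 1 - x 0‖ * ‖x m - x 0‖ :=
    (real_inner_le_norm _ _).trans <| by gcongr; exact norm_sub_zero_le_of_nonexpansive hx M
  linarith [sq_norm_add_mul_le_inner_sum hx m M]

lemma two_mul_sq_le_norm_mul_norm_add (hx : ∀ i j, ‖x (i + 1) - x (j + 1)‖ ≤ ‖x i - x j‖)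
    {ρ : ℝ} (hρ : 0 ≤ ρ) (hspeed : ∀ k : ℕ, k * ρ ≤ ‖x k - x 0‖) (m : ℕ) :
    2 * ρ ^ 2 ≤ ‖x 1 - x 0‖ * ‖(x 1 - x 0) + (x (m + 1) - x m)‖ := by
  obtain ⟨C₀, h₀⟩ := exists_sq_sub_mul_le_inner_sum hx hρ hspeed 0
  obtain ⟨C, h⟩ := exists_sq_sub_mul_le_inner_sum hx hρ hspeed m
  set B := ‖x 1 - x 0‖ * ‖(x 1 - x 0) + (x (m + 1) - x m)‖ with hB
  have hquad (M : ℕ) : 2 * (M * ρ) ^ 2 - (C₀ + C) * M ≤ M * (M + 1) * B :=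
    calc 2 * (M * ρ) ^ 2 - (C₀ + C) * M
      _ ≤ 2 * ⟪∑ i ∈ Finset.range M, (x (i + 1) - x 0), (x 1 - x 0) + (x (m + 1) - x m)⟫ := by
        rw [inner_add_right]
        linarith [h₀ M, h M]
      _ ≤ 2 * ‖∑ i ∈ Finset.range M, (x (i + 1) - x 0)‖ * ‖(x 1 - x 0) + (x (m + 1) - x m)‖ := by
        rw [mul_assoc]
        gcongr
        exact real_inner_le_norm _ _
      _ ≤ M * (M + 1) * B := by
        rw [hB, ← mul_assoc]
        exact mul_le_mul_of_nonneg_right (two_mul_norm_sum_sub_zero_le hx M) (norm_nonneg _)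
  -- For large `M` only the `M ^ 2` terms of `hquad` matter.
  by_contra! hlt
  obtain ⟨M, hM⟩ := exists_nat_gt ((C₀ + C + B) / (2 * ρ ^ 2 - B))
  rw [div_lt_iff₀ (sub_pos.2 hlt)] at hM
  have hpos : (0 : ℝ) < M + 1 := by positivity
  have hlin : 2 * (M + 1) * ρ ^ 2 - (C₀ + C) ≤ (M + 2) * B := by
    refine le_of_mul_le_mul_left ?_ hpos
    have := hquad (M + 1)
    push_cast at this
    linarith
  linarith

lemma sq_norm_increment_sub_le (hx : ∀ i j, ‖x (i + 1) - x (j + 1)‖ ≤ ‖x i - x j‖)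
    {ρ : ℝ} (hρ : 0 ≤ ρ) (hspeed : ∀ k : ℕ, k * ρ ≤ ‖x k - x 0‖) (m : ℕ) :
    ‖(x 1 - x 0) - (x (m + 1) - x m)‖ ^ 2 ≤ 8 * (‖x 1 - x 0‖ ^ 2 - ρ ^ 2) := by
  have hle : ‖x (m + 1) - x m‖ ≤ ‖x 1 - x 0‖ := by
    simpa only [zero_add, add_comm 1] using norm_sub_add_le_of_nonexpansive hx 1 0 m
  have hsum := norm_add_le (x 1 - x 0) (x (m + 1) - x m)
  have hpar := parallelogram_law_with_norm ℝ (x 1 - x 0) (x (m + 1) - x m)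
  have hlow := two_mul_sq_le_norm_mul_norm_add hx hρ hspeed m
  nlinarith [norm_nonneg (x (m + 1) - x m), norm_nonneg ((x 1 - x 0) + (x (m + 1) - x m))]

theorem cauchySeq_increments (hx : ∀ i j, ‖x (i + 1) - x (j + 1)‖ ≤ ‖x i - x j‖)
    {ρ : ℝ} (hρ : 0 ≤ ρ) (hspeed : ∀ n k : ℕ, k * ρ ≤ ‖x (n + k) - x n‖)
    (hlim : Tendsto (fun n ↦ ‖x (n + 1) - x n‖) atTop (𝓝 ρ)) :
    CauchySeq fun n ↦ x (n + 1) - x n := by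
  refine cauchySeq_of_le_tendsto_0' (fun n ↦ √(8 * (‖x (n + 1) - x n‖ ^ 2 - ρ ^ 2)))
    (fun n m hnm ↦ ?_) ?_
  · obtain ⟨k, rfl⟩ := Nat.exists_eq_add_of_le hnm
    rw [dist_eq_norm]
    exact Real.le_sqrt_of_sq_le <|
      sq_norm_increment_sub_le (x := fun i ↦ x (n + i)) (fun i j ↦ hx (n + i) (n + j)) hρ
        (hspeed n) k
  · have hsqrt := (((hlim.pow 2).sub_const (ρ ^ 2)).const_mul 8).sqrt
    rwa [sub_self, mul_zero, Real.sqrt_zero] at hsqrt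

theorem cauchySeq_increments_of_averaged {c : ℝ} (hc : 0 < c)
    (hx : ∀ i j, ‖x (i + 1) - x (j + 1)‖ ^ 2 +
      c * ‖(x (i + 1) - x i) - (x (j + 1) - x j)‖ ^ 2 ≤ ‖x i - x j‖ ^ 2) :
    CauchySeq fun n ↦ x (n + 1) - x n := by
  have hnonexp (i j) : ‖x (i + 1) - x (j + 1)‖ ≤ ‖x i - x j‖ :=
    le_of_sq_le_sq ((le_add_of_nonneg_right (by positivity)).trans (hx i j)) (norm_nonneg _)
  have hanti : Antitone fun n ↦ ‖x (n + 1) - x n‖ :=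
    antitone_nat_of_succ_le fun n ↦ hnonexp (n + 1) n
  have hbdd : BddBelow (Set.range fun n ↦ ‖x (n + 1) - x n‖) :=
    ⟨0, Set.forall_mem_range.2 fun n ↦ norm_nonneg _⟩
  have hlim := tendsto_atTop_ciInf hanti hbdd
  have hdecay : Tendsto
      (fun n ↦ √((‖x (n + 1) - x n‖ ^ 2 - ‖x (n + 1 + 1) - x (n + 1)‖ ^ 2) / c)) atTop (𝓝 0) := by
    have hsq := hlim.pow 2
    simpa using ((hsq.sub ((tendsto_add_atTop_iff_nat 1).2 hsq)).div_const c).sqrt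
  have hreg : Tendsto (fun n ↦ (x (n + 1 + 1) - x (n + 1)) - (x (n + 1) - x n)) atTop (𝓝 0) :=
    squeeze_zero_norm (fun n ↦ Real.le_sqrt_of_sq_le <| by
      rw [le_div_iff₀ hc]
      linarith [hx (n + 1) n]) hdecay
  exact cauchySeq_increments hnonexp (Real.iInf_nonneg fun n ↦ norm_nonneg _)
    (mul_le_norm_add_sub hnonexp hreg hlim) hlim

end Increments

theorem cauchySeq_map_increments_of_core {V G : Type*} [AddCommGroup V] [Module ℝ V]
    [SeminormedAddCommGroup G] [Module ℝ G] (core : PreInnerProductSpace.Core ℝ V)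
    (L : V →ₗ[ℝ] G) {κ : ℝ} (hL : ∀ u, ‖L u‖ ^ 2 ≤ κ * core.inner u u) {x : ℕ → V} {c : ℝ}
    (hc : 0 < c)
    (hx : ∀ i j, core.inner (x (i + 1) - x (j + 1)) (x (i + 1) - x (j + 1)) +
      c * core.inner ((x (i + 1) - x i) - (x (j + 1) - x j))
        ((x (i + 1) - x i) - (x (j + 1) - x j)) ≤ core.inner (x i - x j) (x i - x j)) :
    CauchySeq fun n ↦ L (x (n + 1) - x n) := by
  let : SeminormedAddCommGroup V := InnerProductSpace.Core.toSeminormedAddCommGroup (c := core)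
  let : InnerProductSpace ℝ V := InnerProductSpace.ofCore core
  have hnorm (u : V) : core.inner u u = ‖u‖ ^ 2 := real_inner_self_eq_norm_sq u
  simp only [hnorm] at hL hx
  have hbound (u : V) : ‖L u‖ ≤ √κ * ‖u‖ := by
    simpa using Real.abs_le_sqrt (hL u)
  exact (cauchySeq_increments_of_averaged hc hx).map
    (AddMonoidHomClass.lipschitz_of_bound L _ hbound).uniformContinuous

section ConvexCones

variable {E : Type*} [NormedAddCommGroup E] [InnerProductSpace ℝ E]

lemma proj_mem_and_sub_proj_mem_normalCone [CompleteSpace E] {S : Set E} (hne : S.Nonempty)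
    (hcl : IsClosed S) (hconv : Convex ℝ S) (x : E) :
    proj S x ∈ S ∧ x - proj S x ∈ normalCone S (proj S x) := by
  have hinf {y : E} (hy : y ∈ S) : ⨅ w : S, ‖x - w‖ ≤ ‖x - y‖ :=
    ciInf_le (f := fun w : S ↦ ‖x - w‖) ⟨0, Set.forall_mem_range.2 fun _ ↦ norm_nonneg _⟩ ⟨y, hy⟩
  have hex : ∃ y, y ∈ S ∧ ∀ z ∈ S, ‖x - y‖ ≤ ‖x - z‖ := by
    obtain ⟨y, hy, hmin⟩ := exists_norm_eq_iInf_of_complete_convex hne hcl.isComplete hconv x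
    exact ⟨y, hy, fun z hz ↦ hmin.trans_le (hinf hz)⟩
  obtain ⟨hmem, hmin⟩ := hex.choose_spec
  rw [_root_.proj, dif_pos hex]
  have := hne.to_subtype
  exact ⟨hmem, (norm_eq_iInf_iff_real_inner_le_zero hconv hmem).1
    ((le_ciInf fun w : S ↦ hmin w w.2).antisymm (hinf hmem))⟩

lemma inner_sub_sub_nonneg_of_mem_normalCone {S : Set E} {x x' y y' : E} (hx : x ∈ S)
    (hx' : x' ∈ S) (hy : y ∈ normalCone S x) (hy' : y' ∈ normalCone S x') :
    0 ≤ ⟪y - y', x - x'⟫ := by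
  have h := hy x' hx'
  rw [← neg_sub, inner_neg_right] at h
  rw [inner_sub_left]
  linarith [hy' x hx]

lemma inner_eq_zero_of_mem_normalCone {C : Set E} (hC : ∀ u ∈ C, ∀ a : ℝ, 0 ≤ a → a • u ∈ C)
    {u y : E} (hu : u ∈ C) (hy : y ∈ normalCone C u) : ⟪y, u⟫ = 0 := by
  have hzero := hy _ (hC u hu 0 le_rfl)
  have htwo := hy _ (hC u hu 2 zero_le_two)
  rw [inner_sub_right, real_inner_smul_right] at hzero htwo
  linarith

lemma mem_polarCone_of_mem_normalCone {C : Set E}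
    (hC : ∀ u ∈ C, ∀ a : ℝ, 0 ≤ a → a • u ∈ C) {u y : E} (hu : u ∈ C) (hy : y ∈ normalCone C u) :
    y ∈ polarCone C := fun v hv ↦ by
  simpa only [inner_sub_right, inner_eq_zero_of_mem_normalCone hC hu hy, sub_zero] using hy v hv

lemma isClosed_polarCone (K : Set E) : IsClosed (polarCone K) := by
  simp only [polarCone, Set.ofPred_forall]
  exact isClosed_biInter fun y _ ↦ isClosed_le (by fun_prop) continuous_const

lemma convex_polarCone (K : Set E) : Convex ℝ (polarCone K) := by
  simp only [polarCone, Set.ofPred_forall]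
  exact convex_iInter₂ fun y _ ↦
    convex_halfSpace_le (f := fun w ↦ ⟪w, y⟫) ((innerₗ E).flip y).isLinear 0

lemma smul_mem_polarCone {K : Set E} {u : E} (hu : u ∈ polarCone K) {a : ℝ} (ha : 0 ≤ a) :
    a • u ∈ polarCone K := fun y hy ↦ by
  rw [real_inner_smul_left]
  exact mul_nonpos_of_nonneg_of_nonpos ha (hu y hy)

lemma zero_mem_polarCone (K : Set E) : (0 : E) ∈ polarCone K := fun y _ ↦ (inner_zero_left y).le

theorem polarCone_polarCone_subset [CompleteSpace E] {K : Set E} (hne : K.Nonempty)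
    (hcl : IsClosed K) (hconv : Convex ℝ K) (hK : ∀ u ∈ K, ∀ a : ℝ, 0 ≤ a → a • u ∈ K) :
    polarCone (polarCone K) ⊆ K := fun p hp ↦ by
  obtain ⟨hmem, hnormal⟩ := proj_mem_and_sub_proj_mem_normalCone hne hcl hconv p
  have horth := inner_eq_zero_of_mem_normalCone hK hmem hnormal
  have hle := hp _ (mem_polarCone_of_mem_normalCone hK hmem hnormal)
  have hzero : p - proj K p = 0 := real_inner_self_nonpos.1 <| by
    rwa [inner_sub_right, horth, sub_zero, real_inner_comm]
  rwa [sub_eq_zero.1 hzero]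

lemma mem_recCone_of_tendsto {D : Set E} (hcl : IsClosed D) (hconv : Convex ℝ D) {x : ℕ → E}
    (hx : ∀ n, x n ∈ D) {l : E} (hl : Tendsto (fun n : ℕ ↦ (n : ℝ)⁻¹ • x n) atTop (𝓝 l)) :
    l ∈ recCone D := fun y hy ↦ by
  have hinv := tendsto_inv_atTop_nhds_zero_nat (𝕜 := ℝ)
  have hcomb : Tendsto (fun n : ℕ ↦ (n : ℝ)⁻¹ • x n + (1 - (n : ℝ)⁻¹) • y) atTop (𝓝 (l + y)) := by
    simpa only [sub_zero, one_smul] using hl.add ((hinv.const_sub 1).smul_const y)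
  refine hcl.mem_of_tendsto hcomb ((eventually_ge_atTop 1).mono fun n hn ↦ ?_)
  have hle : (n : ℝ)⁻¹ ≤ 1 := inv_le_one_of_one_le₀ (by exact_mod_cast hn)
  exact hconv (hx n) hy (by positivity) (sub_nonneg.2 hle) (add_sub_cancel _ _)

end ConvexCones

lemma tendsto_inv_smul_of_tendsto_increments {E : Type*} [NormedAddCommGroup E] [NormedSpace ℝ E]
    {x : ℕ → E} {l : E} (h : Tendsto (fun n ↦ x (n + 1) - x n) atTop (𝓝 l)) :
    Tendsto (fun n : ℕ ↦ (n : ℝ)⁻¹ • x n) atTop (𝓝 l) := by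
  have hsum := h.cesaro_smul.add
    ((tendsto_inv_atTop_nhds_zero_nat (𝕜 := ℝ)).smul_const (x 0))
  rw [zero_smul, add_zero] at hsum
  refine hsum.congr fun n ↦ ?_
  rw [Finset.sum_range_sub, ← smul_add, sub_add_cancel]

lemma tendsto_inv_smul_succ_of_tendsto_increments {E : Type*} [NormedAddCommGroup E]
    [NormedSpace ℝ E] {x : ℕ → E} {l : E}
    (h : Tendsto (fun n ↦ x (n + 1) - x n) atTop (𝓝 l)) :
    Tendsto (fun n : ℕ ↦ (n : ℝ)⁻¹ • x (n + 1)) atTop (𝓝 l) := by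
  have hsum := (tendsto_inv_smul_of_tendsto_increments h).add
    ((tendsto_inv_atTop_nhds_zero_nat (𝕜 := ℝ)).smul h)
  rw [zero_smul, add_zero] at hsum
  refine hsum.congr fun n ↦ ?_
  rw [← smul_add, add_sub_cancel]

lemma apply_eq_zero_of_isPositive_of_inner_nonpos {E : Type*} [NormedAddCommGroup E]
    [InnerProductSpace ℝ E] {P : E →L[ℝ] E} (hP : P.IsPositive) {x : E} (hx : ⟪P x, x⟫ ≤ 0) :
    P x = 0 := by
  let B : LinearMap.BilinForm ℝ E := innerₗ E ∘ₗ P.toLinearMap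
  have hsymm : LinearMap.IsSymm B :=
    ⟨fun y z ↦ (hP.inner_left_eq_inner_right y z).trans (real_inner_comm _ _)⟩
  have hker : B x = 0 := (B.apply_apply_same_eq_zero_iff hP.inner_nonneg_left hsymm).1
    (hx.antisymm (hP.inner_nonneg_left x))
  exact inner_self_eq_zero.1 (LinearMap.congr_fun hker (P x))

lemma step_size_condition {α γ lam ν p h : ℝ} (hγ0 : 0 < γ) (hγ1 : γ < 1) (hp0 : 0 ≤ p)
    (hh0 : 0 ≤ h) (hp : p ≤ lam) (hh : h ≤ ν) (hα0 : 0 < α)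
    (hα : α ≤ (8 - 4 / γ) / (√(lam ^ 2 + 16 * ν ^ 2) + lam)) :
    α * p / 2 + (α * h) ^ 2 < 1 := by
  have hlam0 : 0 ≤ lam := hp0.trans hp
  have hnum : 8 - 4 / γ < 4 := by
    have : 4 < 4 / γ := by rw [lt_div_iff₀ hγ0]; linarith
    linarith
  have hden : 0 < √(lam ^ 2 + 16 * ν ^ 2) + lam := by
    refine (by positivity : 0 ≤ √(lam ^ 2 + 16 * ν ^ 2) + lam).lt_of_ne' fun h0 ↦ ?_
    rw [h0, div_zero] at hα
    exact hα.not_gt hα0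
  rw [le_div_iff₀ hden] at hα
  have hlt : α * √(lam ^ 2 + 16 * ν ^ 2) < 4 - α * lam := by linarith
  have hsq := pow_lt_pow_left₀ hlt (by positivity) two_ne_zero
  rw [mul_pow, Real.sq_sqrt (by positivity)] at hsq
  calc α * p / 2 + (α * h) ^ 2 ≤ α * lam / 2 + (α * ν) ^ 2 := by gcongr
    _ < 1 := by linarith

section PIPG

variable {E F : Type*} [NormedAddCommGroup E] [InnerProductSpace ℝ E]
  [NormedAddCommGroup F] [InnerProductSpace ℝ F]

lemma mul_sq_norm_add_sq_norm_le (H : E →L[ℝ] F) {α t : ℝ} (hα : 0 ≤ α) (ht : t ≤ 1)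
    (hH : (α * ‖H‖) ^ 2 ≤ t) (r : E) (s : F) :
    (t - (α * ‖H‖) ^ 2) / 2 * (‖r‖ ^ 2 + ‖s‖ ^ 2) ≤ t * ‖r‖ ^ 2 + ‖s‖ ^ 2 - 2 * α * ⟪H r, s⟫ := by
  have hcross : α * ⟪H r, s⟫ ≤ α * ‖H‖ * (‖r‖ * ‖s‖) := by
    rw [mul_assoc, ← mul_assoc ‖H‖]
    gcongr
    exact (real_inner_le_norm _ _).trans (by gcongr; exact H.le_opNorm r)
  generalize α * ‖H‖ = β at hcross hH ⊢
  generalize hκ : (t - β ^ 2) / 2 = κ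
  have hκ1 : 0 < 1 - κ := by nlinarith [sq_nonneg β]
  -- `κ` is chosen so that the form `[[t - κ, -β], [-β, 1 - κ]]` has nonnegative determinant.
  have hdisc : β ^ 2 ≤ (t - κ) * (1 - κ) := by nlinarith
  have hform : 0 ≤ (1 - κ) * ((t - κ) * ‖r‖ ^ 2 + (1 - κ) * ‖s‖ ^ 2 - 2 * β * (‖r‖ * ‖s‖)) := by
    nlinarith [sq_nonneg ((1 - κ) * ‖s‖ - β * ‖r‖),
      mul_nonneg (sub_nonneg.2 hdisc) (sq_nonneg ‖r‖)]
  linarith [nonneg_of_mul_nonneg_right hform hκ1]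

lemma neg_opNorm_mul_sq_norm_le_inner {P : E →L[ℝ] E} (hP : P.IsPositive) (a r : E) :
    -(‖P‖ * ‖r‖ ^ 2) ≤ 4 * ⟪P a, a + r⟫ := by
  have hsq : 0 ≤ ⟪P ((2 : ℝ) • a + r), (2 : ℝ) • a + r⟫ := hP.inner_nonneg_left _
  have hsymm : ⟪P r, a⟫ = ⟪P a, r⟫ := by rw [hP.inner_left_eq_inner_right, real_inner_comm]
  have hr : ⟪P r, r⟫ ≤ ‖P‖ * ‖r‖ ^ 2 :=
    calc ⟪P r, r⟫ ≤ ‖P r‖ * ‖r‖ := real_inner_le_norm _ _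
      _ ≤ ‖P‖ * ‖r‖ * ‖r‖ := by gcongr; exact P.le_opNorm r
      _ = ‖P‖ * ‖r‖ ^ 2 := by ring
  simp only [map_add, map_smul, inner_add_left, inner_add_right, real_inner_smul_left,
    real_inner_smul_right, hsymm] at hsq
  rw [inner_add_right]
  linarith

/-- The preconditioned semi-inner product
`⟨(x, u), (y, v)⟩ = ⟪x, y⟫ + ⟪u, v⟫ - α ⟪H x, v⟫ - α ⟪H y, u⟫`, for which PIPG is an averaged
iteration. -/
@[reducible] def pipgCore (H : E →L[ℝ] F) {α : ℝ} (hα : 0 ≤ α) (hH : (α * ‖H‖) ^ 2 ≤ 1) :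
    PreInnerProductSpace.Core ℝ (E × F) where
  inner x y := ⟪x.1, y.1⟫ + ⟪x.2, y.2⟫ - α * ⟪H x.1, y.2⟫ - α * ⟪H y.1, x.2⟫
  conj_inner_symm x y := by
    simp only [conj_trivial, real_inner_comm x.1 y.1, real_inner_comm x.2 y.2]
    ring
  re_inner_nonneg x := by
    have hcoer := mul_sq_norm_add_sq_norm_le H hα le_rfl hH x.1 x.2
    have hpos : 0 ≤ (1 - (α * ‖H‖) ^ 2) / 2 * (‖x.1‖ ^ 2 + ‖x.2‖ ^ 2) :=
      mul_nonneg (by linarith) (by positivity)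
    simp only [real_inner_self_eq_norm_sq, RCLike.re_to_real]
    linarith
  add_left x y z := by
    simp only [Prod.fst_add, Prod.snd_add, inner_add_left, inner_add_right, map_add]
    ring
  smul_left x y a := by
    simp only [Prod.smul_fst, Prod.smul_snd, real_inner_smul_left, real_inner_smul_right, map_smul,
      conj_trivial]
    ring

lemma pipgCore_inner (H : E →L[ℝ] F) {α : ℝ} (hα : 0 ≤ α) (hH : (α * ‖H‖) ^ 2 ≤ 1) (x y : E × F) :
    (pipgCore H hα hH).inner x y =
      ⟪x.1, y.1⟫ + ⟪x.2, y.2⟫ - α * ⟪H x.1, y.2⟫ - α * ⟪H y.1, x.2⟫ := rfl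

lemma pipgCore_inner_self (H : E →L[ℝ] F) {α : ℝ} (hα : 0 ≤ α) (hH : (α * ‖H‖) ^ 2 ≤ 1)
    (x : E × F) :
    (pipgCore H hα hH).inner x x = ‖x.1‖ ^ 2 + ‖x.2‖ ^ 2 - 2 * α * ⟪H x.1, x.2⟫ := by
  rw [pipgCore_inner, real_inner_self_eq_norm_sq, real_inner_self_eq_norm_sq]
  ring

lemma pipgCore_inner_self_le (H : E →L[ℝ] F) {α p : ℝ} (hα : 0 ≤ α) (hp : 0 ≤ p)
    (hstep : p + (α * ‖H‖) ^ 2 ≤ 1) (hH : (α * ‖H‖) ^ 2 ≤ 1) (r : E × F) :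
    (1 - p - (α * ‖H‖) ^ 2) / 4 * (pipgCore H hα hH).inner r r ≤
      (pipgCore H hα hH).inner r r - p * ‖r.1‖ ^ 2 := by
  have hupper := mul_sq_norm_add_sq_norm_le H hα le_rfl hH r.1 (-r.2)
  have hlower := mul_sq_norm_add_sq_norm_le H hα (sub_le_self 1 hp) (by linarith) r.1 r.2
  rw [pipgCore_inner_self]
  rw [inner_neg_right, norm_neg] at hupper
  have hpos : 0 ≤ (1 - (α * ‖H‖) ^ 2) / 2 * (‖r.1‖ ^ 2 + ‖r.2‖ ^ 2) :=
    mul_nonneg (by linarith) (by positivity)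
  have hdouble := mul_le_mul_of_nonneg_left
    (show ‖r.1‖ ^ 2 + ‖r.2‖ ^ 2 - 2 * α * ⟪H r.1, r.2⟫ ≤ 2 * (‖r.1‖ ^ 2 + ‖r.2‖ ^ 2) by linarith)
    (show 0 ≤ (1 - p - (α * ‖H‖) ^ 2) / 4 by linarith)
  linarith

/-- The vector `w n - w (n + 1) + α (H (2 z (n + 1) - z n) - g)`: the dual PIPG update says that it
is normal to the dual cone at `w (n + 1)`. -/
def dualResidual (α : ℝ) (H : E →L[ℝ] F) (g : F) (z : ℕ → E) (w : ℕ → F) (n : ℕ) : F :=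
  w n - w (n + 1) + α • (H (z (n + 1) + (z (n + 1) - z n)) - g)

lemma tendsto_inv_smul_dualResidual (α : ℝ) (H : E →L[ℝ] F) (g : F) {z : ℕ → E} {w : ℕ → F}
    {zbar : E} {wbar : F} (hz : Tendsto (fun n ↦ z (n + 1) - z n) atTop (𝓝 zbar))
    (hw : Tendsto (fun n ↦ w (n + 1) - w n) atTop (𝓝 wbar)) :
    Tendsto (fun n : ℕ ↦ (n : ℝ)⁻¹ • dualResidual α H g z w n) atTop (𝓝 (α • H zbar)) := by
  have hinv := tendsto_inv_atTop_nhds_zero_nat (𝕜 := ℝ)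
  have hHz := (H.continuous.tendsto _).comp (tendsto_inv_smul_succ_of_tendsto_increments hz)
  have hHd := (H.continuous.tendsto _).comp hz
  have hsum := (((hHz.add (hinv.smul hHd)).sub (hinv.smul_const g)).const_smul α).sub
    (hinv.smul hw)
  simp only [zero_smul, add_zero, sub_zero] at hsum
  refine hsum.congr fun n ↦ ?_
  simp only [dualResidual, Function.comp_apply, map_smul, map_add]
  module

variable [CompleteSpace E] [CompleteSpace F]

lemma pipgCore_inner_sub_le {P : E →L[ℝ] E} (hP : P.IsPositive) (H : E →L[ℝ] F) {α : ℝ}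
    (hα : 0 ≤ α) (hH : (α * ‖H‖) ^ 2 ≤ 1) (x x' : E × F)
    (hprimal : 0 ≤ ⟪x.1 - x'.1 - α • (P x.1 + adjoint H x.2), x'.1⟫)
    (hdual : 0 ≤ ⟪x.2 - x'.2 + α • H (x'.1 + (x'.1 - x.1)), x'.2⟫) :
    4 * (pipgCore H hα hH).inner (x' - x) x' ≤ α * (‖P‖ * ‖x'.1 - x.1‖ ^ 2) := by
  have hP' := mul_le_mul_of_nonneg_left
    (neg_opNorm_mul_sq_norm_le_inner hP x.1 (x'.1 - x.1)) hα
  have hinner : (pipgCore H hα hH).inner (x' - x) x' =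
      -⟪x.1 - x'.1 - α • (P x.1 + adjoint H x.2), x'.1⟫ -
        ⟪x.2 - x'.2 + α • H (x'.1 + (x'.1 - x.1)), x'.2⟫ - α * ⟪P x.1, x'.1⟫ := by
    simp only [pipgCore_inner, Prod.fst_sub, Prod.snd_sub, map_add, map_sub, inner_add_left,
      inner_sub_left, inner_sub_right, real_inner_smul_left, adjoint_inner_left,
      real_inner_comm x.2]
    ring
  rw [add_sub_cancel] at hP'
  linarith

lemma pipgCore_descent {P : E →L[ℝ] E} (hP : P.IsPositive) (H : E →L[ℝ] F) {α : ℝ} (hα : 0 ≤ α)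
    (hstep : α * ‖P‖ / 2 + (α * ‖H‖) ^ 2 ≤ 1) (hH : (α * ‖H‖) ^ 2 ≤ 1) (x x' : E × F)
    (hprimal : 0 ≤ ⟪x.1 - x'.1 - α • (P x.1 + adjoint H x.2), x'.1⟫)
    (hdual : 0 ≤ ⟪x.2 - x'.2 + α • H (x'.1 + (x'.1 - x.1)), x'.2⟫) :
    (pipgCore H hα hH).inner x' x' + (1 - α * ‖P‖ / 2 - (α * ‖H‖) ^ 2) / 4 *
      (pipgCore H hα hH).inner (x' - x) (x' - x) ≤ (pipgCore H hα hH).inner x x := by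
  have hpolar : (pipgCore H hα hH).inner x x = (pipgCore H hα hH).inner x' x' +
      (pipgCore H hα hH).inner (x' - x) (x' - x) -
        2 * (pipgCore H hα hH).inner (x' - x) x' := by
    simp only [pipgCore_inner, Prod.fst_sub, Prod.snd_sub, map_sub, inner_sub_left, inner_sub_right,
      real_inner_comm x.1, real_inner_comm x.2]
    ring
  have hcross := pipgCore_inner_sub_le hP H hα hH x x' hprimal hdual
  have hcoer := pipgCore_inner_self_le H hα (by positivity) hstep hH (x' - x)
  rw [Prod.fst_sub] at hcoer
  linarith

/-- The vector `z n - z (n + 1) - α (P (z n) + q + H* (w n))`: the primal PIPG update says that it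
is normal to `D` at `z (n + 1)`. -/
noncomputable def primalResidual (α : ℝ) (P : E →L[ℝ] E) (q : E) (H : E →L[ℝ] F) (z : ℕ → E)
    (w : ℕ → F) (n : ℕ) : E :=
  z n - z (n + 1) - α • (P (z n) + q + adjoint H (w n))

lemma tendsto_inv_smul_primalResidual (α : ℝ) (P : E →L[ℝ] E) (q : E) (H : E →L[ℝ] F)
    {z : ℕ → E} {w : ℕ → F} {zbar : E} {wbar : F}
    (hz : Tendsto (fun n ↦ z (n + 1) - z n) atTop (𝓝 zbar))
    (hw : Tendsto (fun n ↦ w (n + 1) - w n) atTop (𝓝 wbar)) :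
    Tendsto (fun n : ℕ ↦ (n : ℝ)⁻¹ • primalResidual α P q H z w n) atTop
      (𝓝 (-(α • (P zbar + adjoint H wbar)))) := by
  have hinv := tendsto_inv_atTop_nhds_zero_nat (𝕜 := ℝ)
  have hPz := (P.continuous.tendsto _).comp (tendsto_inv_smul_of_tendsto_increments hz)
  have hHw := ((adjoint H).continuous.tendsto _).comp (tendsto_inv_smul_of_tendsto_increments hw)
  have hsum := ((hinv.smul hz).add (((hPz.add (hinv.smul_const q)).add hHw).const_smul α)).neg
  simp only [zero_smul, zero_add, add_zero] at hsum
  refine hsum.congr fun n ↦ ?_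
  simp only [primalResidual, Function.comp_apply, map_smul]
  module

/-- The sequences `z`, `w` form a PIPG orbit for the primal set `D` and the dual set `C` (the polar
cone `K°` in the paper). The projections are encoded by their optimality conditions, `v` is
eliminated, and `w n` is the paper's `w^{n+1}`, so that `(z (n + 1), w (n + 1))` depends only on
`(z n, w n)`. -/
structure IsPIPGOrbit (α : ℝ) (P : E →L[ℝ] E) (q : E) (H : E →L[ℝ] F) (g : F) (D : Set E)
    (C : Set F) (z : ℕ → E) (w : ℕ → F) : Prop where
  primal_mem (n : ℕ) : z (n + 1) ∈ D
  dual_mem (n : ℕ) : w n ∈ C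
  primal_normal (n : ℕ) : primalResidual α P q H z w n ∈ normalCone D (z (n + 1))
  dual_normal (n : ℕ) : dualResidual α H g z w n ∈ normalCone C (w (n + 1))

theorem isPIPGOrbit_of_proj {α : ℝ} {P : E →L[ℝ] E} {q : E} {H : E →L[ℝ] F} {g : F} {D : Set E}
    (hDne : D.Nonempty) (hDcl : IsClosed D) (hDconv : Convex ℝ D) {K : Set F} {w v : ℕ → F}
    {z : ℕ → E} (hw : ∀ j, w (j + 1) = proj (polarCone K) (v j + α • (H (z j) - g)))
    (hz : ∀ j, z (j + 1) = proj D (z j - α • (P (z j) + q + adjoint H (w (j + 1)))))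
    (hv : ∀ j, v (j + 1) = w (j + 1) + α • H (z (j + 1) - z j)) :
    IsPIPGOrbit α P q H g D (polarCone K) z (fun j ↦ w (j + 1)) := by
  have hprimal (j : ℕ) := proj_mem_and_sub_proj_mem_normalCone hDne hDcl hDconv
    (z j - α • (P (z j) + q + adjoint H (w (j + 1))))
  have hdual (j : ℕ) := proj_mem_and_sub_proj_mem_normalCone ⟨0, zero_mem_polarCone K⟩
    (isClosed_polarCone K) (convex_polarCone K) (v j + α • (H (z j) - g))
  simp only [← hz] at hprimal
  simp only [← hw] at hdual
  refine ⟨fun j ↦ (hprimal j).1, fun j ↦ (hdual j).1, fun j ↦ ?_, fun j ↦ ?_⟩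
  · rw [primalResidual, sub_right_comm]
    exact (hprimal j).2
  · convert (hdual (j + 1)).2 using 1
    rw [dualResidual, hv, map_add]
    module

namespace IsPIPGOrbit

variable {α : ℝ} {P : E →L[ℝ] E} {q : E} {H : E →L[ℝ] F} {g : F} {D : Set E} {C : Set F}
  {z : ℕ → E} {w : ℕ → F}

lemma descent (h : IsPIPGOrbit α P q H g D C z w) (hP : P.IsPositive) (hα : 0 ≤ α)
    (hstep : α * ‖P‖ / 2 + (α * ‖H‖) ^ 2 ≤ 1) (hH : (α * ‖H‖) ^ 2 ≤ 1) (i j : ℕ) :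
    (pipgCore H hα hH).inner ((z (i + 1), w (i + 1)) - (z (j + 1), w (j + 1)))
        ((z (i + 1), w (i + 1)) - (z (j + 1), w (j + 1))) +
      (1 - α * ‖P‖ / 2 - (α * ‖H‖) ^ 2) / 4 * (pipgCore H hα hH).inner
        (((z (i + 1), w (i + 1)) - (z i, w i)) - ((z (j + 1), w (j + 1)) - (z j, w j)))
        (((z (i + 1), w (i + 1)) - (z i, w i)) - ((z (j + 1), w (j + 1)) - (z j, w j))) ≤
      (pipgCore H hα hH).inner ((z i, w i) - (z j, w j)) ((z i, w i) - (z j, w j)) := by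
  have hprimal := inner_sub_sub_nonneg_of_mem_normalCone (h.primal_mem i) (h.primal_mem j)
    (h.primal_normal i) (h.primal_normal j)
  have hdual := inner_sub_sub_nonneg_of_mem_normalCone (h.dual_mem (i + 1)) (h.dual_mem (j + 1))
    (h.dual_normal i) (h.dual_normal j)
  rw [sub_sub_sub_comm (z (i + 1), w (i + 1))]
  refine pipgCore_descent hP H hα hstep hH _ _ ?_ ?_
  · convert hprimal using 2
    · simp only [primalResidual, Prod.fst_sub, Prod.snd_sub, map_sub]
      module
    · rfl
  · convert hdual using 2
    · simp only [dualResidual, Prod.fst_sub, Prod.snd_sub, map_add, map_sub]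
      module
    · rfl

theorem exists_tendsto_increments (h : IsPIPGOrbit α P q H g D C z w) (hP : P.IsPositive)
    (hα : 0 ≤ α) (hstep : α * ‖P‖ / 2 + (α * ‖H‖) ^ 2 < 1) :
    (∃ zbar, Tendsto (fun n ↦ z (n + 1) - z n) atTop (𝓝 zbar)) ∧
      ∃ wbar, Tendsto (fun n ↦ w (n + 1) - w n) atTop (𝓝 wbar) := by
  have hH : (α * ‖H‖) ^ 2 < 1 := (le_add_of_nonneg_left (by positivity)).trans_lt hstep
  have hbound (r : E × F) : ‖r.1‖ ^ 2 + ‖r.2‖ ^ 2 ≤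
      ((1 - (α * ‖H‖) ^ 2) / 2)⁻¹ * (pipgCore H hα hH.le).inner r r := by
    rw [pipgCore_inner_self, inv_mul_eq_div, le_div_iff₀' (by linarith), ← one_mul (‖r.1‖ ^ 2)]
    simpa only [one_mul] using mul_sq_norm_add_sq_norm_le H hα le_rfl hH.le r.1 r.2
  have hc : 0 < (1 - α * ‖P‖ / 2 - (α * ‖H‖) ^ 2) / 4 := by linarith
  have hdesc := h.descent hP hα hstep.le hH.le
  have hz : CauchySeq fun n ↦ z (n + 1) - z n :=
    cauchySeq_map_increments_of_core (pipgCore H hα hH.le) (.fst ℝ E F)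
      (fun r ↦ (le_add_of_nonneg_right (by positivity)).trans (hbound r))
      (x := fun n ↦ (z n, w n)) hc hdesc
  have hw : CauchySeq fun n ↦ w (n + 1) - w n :=
    cauchySeq_map_increments_of_core (pipgCore H hα hH.le) (.snd ℝ E F)
      (fun r ↦ (le_add_of_nonneg_left (by positivity)).trans (hbound r))
      (x := fun n ↦ (z n, w n)) hc hdesc
  exact ⟨cauchySeq_tendsto_of_complete hz, cauchySeq_tendsto_of_complete hw⟩

lemma limit_mem_dual (h : IsPIPGOrbit α P q H g D C z w) (hCcl : IsClosed C)
    (hC : ∀ u ∈ C, ∀ a : ℝ, 0 ≤ a → a • u ∈ C) {wbar : F}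
    (hw : Tendsto (fun n ↦ w (n + 1) - w n) atTop (𝓝 wbar)) : wbar ∈ C :=
  hCcl.mem_of_tendsto (tendsto_inv_smul_of_tendsto_increments hw) <|
    .of_forall fun n ↦ hC _ (h.dual_mem n) _ (by positivity)

variable {zbar : E} {wbar : F}

lemma map_limit_mem_polarCone (h : IsPIPGOrbit α P q H g D C z w) (hα : 0 < α)
    (hC : ∀ u ∈ C, ∀ a : ℝ, 0 ≤ a → a • u ∈ C)
    (hz : Tendsto (fun n ↦ z (n + 1) - z n) atTop (𝓝 zbar))
    (hw : Tendsto (fun n ↦ w (n + 1) - w n) atTop (𝓝 wbar)) : H zbar ∈ polarCone C := by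
  have hmem : α • H zbar ∈ polarCone C :=
    (isClosed_polarCone C).mem_of_tendsto (tendsto_inv_smul_dualResidual α H g hz hw) <|
      .of_forall fun n ↦ smul_mem_polarCone
        (mem_polarCone_of_mem_normalCone hC (h.dual_mem (n + 1)) (h.dual_normal n)) (by positivity)
  simpa only [inv_smul_smul₀ hα.ne'] using smul_mem_polarCone hmem (inv_nonneg.2 hα.le)

lemma inner_map_limit_eq_zero (h : IsPIPGOrbit α P q H g D C z w) (hα : α ≠ 0)
    (hC : ∀ u ∈ C, ∀ a : ℝ, 0 ≤ a → a • u ∈ C)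
    (hz : Tendsto (fun n ↦ z (n + 1) - z n) atTop (𝓝 zbar))
    (hw : Tendsto (fun n ↦ w (n + 1) - w n) atTop (𝓝 wbar)) : ⟪H zbar, wbar⟫ = 0 := by
  have hlim := (tendsto_inv_smul_dualResidual α H g hz hw).inner (𝕜 := ℝ)
    (tendsto_inv_smul_succ_of_tendsto_increments hw)
  have horth (n : ℕ) : ⟪(n : ℝ)⁻¹ • dualResidual α H g z w n, (n : ℝ)⁻¹ • w (n + 1)⟫ = 0 := by
    rw [real_inner_smul_left, real_inner_smul_right,
      inner_eq_zero_of_mem_normalCone hC (h.dual_mem (n + 1)) (h.dual_normal n), mul_zero, mul_zero]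
  simp only [horth, tendsto_const_nhds_iff, real_inner_smul_left] at hlim
  exact (mul_eq_zero.1 hlim.symm).resolve_left hα

lemma apply_limit_eq_zero (h : IsPIPGOrbit α P q H g D C z w) (hP : P.IsPositive) (hα : 0 < α)
    (hC : ∀ u ∈ C, ∀ a : ℝ, 0 ≤ a → a • u ∈ C)
    (hz : Tendsto (fun n ↦ z (n + 1) - z n) atTop (𝓝 zbar))
    (hw : Tendsto (fun n ↦ w (n + 1) - w n) atTop (𝓝 wbar)) : P zbar = 0 := by
  have hdiff : Tendsto (fun n : ℕ ↦ (n : ℝ)⁻¹ • (z 1 - z (n + 1))) atTop (𝓝 (-zbar)) := by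
    simpa only [smul_sub, zero_smul, zero_sub] using
      ((tendsto_inv_atTop_nhds_zero_nat (𝕜 := ℝ)).smul_const (z 1)).sub
        (tendsto_inv_smul_succ_of_tendsto_increments hz)
  have hle := le_of_tendsto'
    ((tendsto_inv_smul_primalResidual α P q H hz hw).inner (𝕜 := ℝ) hdiff) fun n ↦ by
      rw [real_inner_smul_left, real_inner_smul_right]
      have := h.primal_normal n (z 1) (h.primal_mem 0)
      exact mul_nonpos_of_nonneg_of_nonpos (by positivity)
        (mul_nonpos_of_nonneg_of_nonpos (by positivity) this)
  rw [inner_neg_neg, real_inner_smul_left, inner_add_left, adjoint_inner_left,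
    real_inner_comm (H zbar), h.inner_map_limit_eq_zero hα.ne' hC hz hw, add_zero] at hle
  exact apply_eq_zero_of_isPositive_of_inner_nonpos hP (nonpos_of_mul_nonpos_right hle hα)

lemma sq_norm_primal_limit_add_nonneg (h : IsPIPGOrbit α P q H g D C z w) (hP : P.IsPositive)
    (hα : 0 ≤ α) (hz : Tendsto (fun n ↦ z (n + 1) - z n) atTop (𝓝 zbar)) (hrec : zbar ∈ recCone D)
    (hHz : H zbar ∈ polarCone C) (hPz : P zbar = 0) : 0 ≤ ‖zbar‖ ^ 2 + α * ⟪q, zbar⟫ := by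
  have hlim := (hz.inner (𝕜 := ℝ) (tendsto_const_nhds (x := zbar))).add_const (α * ⟪q, zbar⟫)
  rw [real_inner_self_eq_norm_sq] at hlim
  refine ge_of_tendsto' hlim fun n ↦ ?_
  have hnormal := h.primal_normal n _ (hrec _ (h.primal_mem n))
  have hPn : ⟪P (z n), zbar⟫ = 0 := by rw [hP.inner_left_eq_inner_right, hPz, inner_zero_right]
  have hdual := mul_nonpos_of_nonneg_of_nonpos hα (hHz _ (h.dual_mem n))
  rw [primalResidual, add_sub_cancel_right, ← neg_sub (z (n + 1)), inner_sub_left, inner_neg_left,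
    real_inner_smul_left, inner_add_left, inner_add_left, adjoint_inner_left, hPn,
    real_inner_comm (H zbar)] at hnormal
  linarith

lemma duality_gap_le (h : IsPIPGOrbit α P q H g D C z w) (hP : P.IsPositive) (hα : 0 ≤ α)
    (hC : ∀ u ∈ C, ∀ a : ℝ, 0 ≤ a → a • u ∈ C) {y : E} (hy : y ∈ D) (n : ℕ) :
    ⟪z (n + 1) - z n + α • q, z (n + 1)⟫ + α * ⟪P (z n), z (n + 1) - z n⟫ +
        ⟪w (n + 1) - w n - α • H (z (n + 1) - z n) + α • g, w (n + 1)⟫ ≤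
      -⟪primalResidual α P q H z w n, y⟫ + α * ⟪H (z (n + 1)), w (n + 1) - w n⟫ := by
  have hprimal := h.primal_normal n y hy
  have hdual := inner_eq_zero_of_mem_normalCone hC (h.dual_mem (n + 1)) (h.dual_normal n)
  have hpos := mul_nonneg hα (hP.inner_nonneg_left (z n))
  rw [inner_sub_right] at hprimal
  have hexpand : ⟪primalResidual α P q H z w n, z (n + 1)⟫ =
      -⟪z (n + 1) - z n + α • q, z (n + 1)⟫ - α * ⟪P (z n), z n⟫ -
        α * ⟪P (z n), z (n + 1) - z n⟫ - α * ⟪H (z (n + 1)), w n⟫ := by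
    simp only [primalResidual, inner_add_left, inner_sub_left, inner_sub_right,
      real_inner_smul_left, adjoint_inner_left, real_inner_comm (H (z (n + 1)))]
    ring
  simp only [dualResidual, map_add, inner_add_left, inner_sub_left, real_inner_smul_left,
    inner_sub_right] at hexpand hdual ⊢
  linarith

lemma mul_inner_neg_adjoint_limit_le (h : IsPIPGOrbit α P q H g D C z w) (hP : P.IsPositive)
    (hα : 0 < α) (hC : ∀ u ∈ C, ∀ a : ℝ, 0 ≤ a → a • u ∈ C)
    (hz : Tendsto (fun n ↦ z (n + 1) - z n) atTop (𝓝 zbar))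
    (hw : Tendsto (fun n ↦ w (n + 1) - w n) atTop (𝓝 wbar)) {y : E} (hy : y ∈ D) :
    α * ⟪y, -(adjoint H wbar)⟫ ≤
      -(‖zbar‖ ^ 2 + α * ⟪q, zbar⟫) - (‖wbar‖ ^ 2 + α * ⟪g, wbar⟫) := by
  have hz' := tendsto_inv_smul_succ_of_tendsto_increments hz
  have hw' := tendsto_inv_smul_succ_of_tendsto_increments hw
  have hPz := (P.continuous.tendsto _).comp (tendsto_inv_smul_of_tendsto_increments hz)
  have hHz := (H.continuous.tendsto _).comp hz'
  have hHd := (H.continuous.tendsto _).comp hz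
  have hleft := (((hz.add_const (α • q)).inner (𝕜 := ℝ) hz').add
    ((hPz.inner (𝕜 := ℝ) hz).const_mul α)).add
    (((hw.sub (hHd.const_smul α)).add_const (α • g)).inner (𝕜 := ℝ) hw')
  have hright := ((tendsto_inv_smul_primalResidual α P q H hz hw).inner (𝕜 := ℝ)
    (tendsto_const_nhds (x := y))).neg.add ((hHz.inner (𝕜 := ℝ) hw).const_mul α)
  have hle := le_of_tendsto_of_tendsto' hleft hright fun n ↦ by
    have hgap := mul_le_mul_of_nonneg_left (h.duality_gap_le hP hα.le hC hy n)
      (show 0 ≤ (n : ℝ)⁻¹ by positivity)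
    simp only [Function.comp_apply, map_smul, real_inner_smul_left, real_inner_smul_right]
    linarith
  simp only [h.apply_limit_eq_zero hP hα hC hz hw, h.inner_map_limit_eq_zero hα.ne' hC hz hw,
    inner_neg_left, inner_add_left, inner_sub_left, real_inner_smul_left, inner_zero_left,
    adjoint_inner_left, real_inner_self_eq_norm_sq] at hle
  rw [inner_neg_right, real_inner_comm, adjoint_inner_left]
  linarith

lemma sq_norm_dual_limit_add_nonneg (h : IsPIPGOrbit α P q H g D C z w) (hα : 0 < α)
    (hCcl : IsClosed C) (hC : ∀ u ∈ C, ∀ a : ℝ, 0 ≤ a → a • u ∈ C)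
    (hz : Tendsto (fun n ↦ z (n + 1) - z n) atTop (𝓝 zbar))
    (hw : Tendsto (fun n ↦ w (n + 1) - w n) atTop (𝓝 wbar)) {s : ℝ}
    (hs : ∀ y ∈ D, ⟪y, -(adjoint H wbar)⟫ ≤ s) :
    0 ≤ ‖wbar‖ ^ 2 + α * ⟪g, wbar⟫ + α * s := by
  have hHd := (H.continuous.tendsto _).comp hz
  have hlim := (((hw.inner (𝕜 := ℝ) (tendsto_const_nhds (x := wbar))).sub
    ((hHd.inner (𝕜 := ℝ) (tendsto_const_nhds (x := wbar))).const_mul α)).add_const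
      (α * ⟪g, wbar⟫)).add_const (α * s)
  rw [h.inner_map_limit_eq_zero hα.ne' hC hz hw, mul_zero, sub_zero,
    real_inner_self_eq_norm_sq] at hlim
  refine ge_of_tendsto' hlim fun n ↦ ?_
  have hdual := mem_polarCone_of_mem_normalCone hC (h.dual_mem (n + 1)) (h.dual_normal n) wbar
    (h.limit_mem_dual hCcl hC hw)
  have hbound := mul_le_mul_of_nonneg_left (hs _ (h.primal_mem n)) hα.le
  rw [inner_neg_right, adjoint_inner_right] at hbound
  simp only [dualResidual, Function.comp_apply, map_add, inner_add_left, inner_sub_left,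
    real_inner_smul_left] at hdual ⊢
  linarith

theorem sq_norm_primal_limit_add_eq_zero_and_isLUB (h : IsPIPGOrbit α P q H g D C z w)
    (hP : P.IsPositive) (hα : 0 < α) (hDcl : IsClosed D) (hDconv : Convex ℝ D) (hCcl : IsClosed C)
    (hC : ∀ u ∈ C, ∀ a : ℝ, 0 ≤ a → a • u ∈ C)
    (hz : Tendsto (fun n ↦ z (n + 1) - z n) atTop (𝓝 zbar))
    (hw : Tendsto (fun n ↦ w (n + 1) - w n) atTop (𝓝 wbar)) :
    ‖zbar‖ ^ 2 + α * ⟪q, zbar⟫ = 0 ∧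
      IsLUB {r : ℝ | ∃ y ∈ D, r = ⟪y, -(adjoint H wbar)⟫}
        (-(1 / α) * ‖wbar‖ ^ 2 - ⟪g, wbar⟫) := by
  have hprimal := h.sq_norm_primal_limit_add_nonneg hP hα.le hz
    (mem_recCone_of_tendsto hDcl hDconv h.primal_mem
      (tendsto_inv_smul_succ_of_tendsto_increments hz))
    (h.map_limit_mem_polarCone hα hC hz hw) (h.apply_limit_eq_zero hP hα hC hz hw)
  have hupper {y : E} (hy : y ∈ D) := h.mul_inner_neg_adjoint_limit_le hP hα hC hz hw hy
  have hlower {s : ℝ} (hs : ∀ y ∈ D, ⟪y, -(adjoint H wbar)⟫ ≤ s) :=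
    h.sq_norm_dual_limit_add_nonneg hα hCcl hC hz hw hs
  have hzero : ‖zbar‖ ^ 2 + α * ⟪q, zbar⟫ = 0 := by
    have hbound := hlower fun y hy ↦ (le_div_iff₀' hα).2 (hupper hy)
    rw [mul_div_cancel₀ _ hα.ne'] at hbound
    linarith
  have hvalue : α * (-(1 / α) * ‖wbar‖ ^ 2 - ⟪g, wbar⟫) = -(‖wbar‖ ^ 2 + α * ⟪g, wbar⟫) := by
    field_simp
    ring
  refine ⟨hzero, ?_, fun s hs ↦ ?_⟩
  · rintro _ ⟨y, hy, rfl⟩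
    refine le_of_mul_le_mul_left ?_ hα
    linarith [hupper hy]
  · refine le_of_mul_le_mul_left ?_ hα
    linarith [hlower fun y hy ↦ hs ⟨y, hy, rfl⟩]

end IsPIPGOrbit

theorem stmt4_general {α : ℝ} {P : E →L[ℝ] E} (hP : P.IsPositive) (q : E) (H : E →L[ℝ] F) (g : F)
    {D : Set E} (hDne : D.Nonempty) (hDcl : IsClosed D) (hDconv : Convex ℝ D) {K : Set F}
    (hKne : K.Nonempty) (hKcl : IsClosed K) (hKconv : Convex ℝ K)
    (hKcone : ∀ w ∈ K, ∀ a : ℝ, 0 ≤ a → a • w ∈ K) {w v : ℕ → F} {z : ℕ → E}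
    (hw : ∀ j, w (j + 1) = proj (polarCone K) (v j + α • (H (z j) - g)))
    (hz : ∀ j, z (j + 1) = proj D (z j - α • (P (z j) + q + adjoint H (w (j + 1)))))
    (hv : ∀ j, v (j + 1) = w (j + 1) + α • H (z (j + 1) - z j)) (hα : 0 < α)
    (hstep : α * ‖P‖ / 2 + (α * ‖H‖) ^ 2 < 1) :
    ∃ zbar ∈ recCone D, ∃ wbar ∈ polarCone K,
      Tendsto (fun j ↦ z (j + 1) - z j) atTop (𝓝 zbar) ∧
      Tendsto (fun j ↦ w (j + 1) - w j) atTop (𝓝 wbar) ∧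
      H zbar ∈ K ∧ P zbar = 0 ∧ ⟪q, zbar⟫ = -(1 / α) * ‖zbar‖ ^ 2 ∧
      IsLUB {r : ℝ | ∃ y ∈ D, r = ⟪y, -(adjoint H wbar)⟫}
        (-(1 / α) * ‖wbar‖ ^ 2 - ⟪g, wbar⟫) := by
  have hC : ∀ u ∈ polarCone K, ∀ a : ℝ, 0 ≤ a → a • u ∈ polarCone K :=
    fun u hu a ha ↦ smul_mem_polarCone hu ha
  have h := isPIPGOrbit_of_proj hDne hDcl hDconv hw hz hv
  obtain ⟨⟨zbar, hzlim⟩, wbar, hwlim⟩ := h.exists_tendsto_increments hP hα.le hstep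
  obtain ⟨hzero, hlub⟩ :=
    h.sq_norm_primal_limit_add_eq_zero_and_isLUB hP hα hDcl hDconv (isClosed_polarCone K) hC hzlim
      hwlim
  refine ⟨zbar, mem_recCone_of_tendsto hDcl hDconv h.primal_mem
      (tendsto_inv_smul_succ_of_tendsto_increments hzlim),
    wbar, h.limit_mem_dual (isClosed_polarCone K) hC hwlim, hzlim,
    (tendsto_add_atTop_iff_nat 1).1 hwlim,
    polarCone_polarCone_subset hKne hKcl hKconv hKcone
      (h.map_limit_mem_polarCone hα hC hzlim hwlim),
    h.apply_limit_eq_zero hP hα hC hzlim hwlim, ?_, hlub⟩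
  field_simp
  linarith

end PIPG

/-- the differences of consecutive PIPG iterates converge to limits
`z̄ ∈ rec D`, `w̄ ∈ K°` satisfying the stated conditions. -/
theorem stmt4 {n m : ℕ} (α : ℝ)
    (P : EuclideanSpace ℝ (Fin n) →L[ℝ] EuclideanSpace ℝ (Fin n))
    (hPsa : IsSelfAdjoint P) (hPpsd : ∀ x, 0 ≤ ⟪P x, x⟫)
    (q : EuclideanSpace ℝ (Fin n))
    (H : EuclideanSpace ℝ (Fin n) →L[ℝ] EuclideanSpace ℝ (Fin m))
    (g : EuclideanSpace ℝ (Fin m))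
    (D : Set (EuclideanSpace ℝ (Fin n)))
    (hDne : D.Nonempty) (hDcl : IsClosed D) (hDconv : Convex ℝ D)
    (K : Set (EuclideanSpace ℝ (Fin m)))
    (hKne : K.Nonempty) (hKcl : IsClosed K) (hKconv : Convex ℝ K)
    (hKcone : ∀ w ∈ K, ∀ a : ℝ, 0 ≤ a → a • w ∈ K)
    (w v : ℕ → EuclideanSpace ℝ (Fin m))
    (z : ℕ → EuclideanSpace ℝ (Fin n))
    (hw : ∀ j : ℕ, w (j + 1) = proj (polarCone K) (v j + α • (H (z j) - g)))
    (hz : ∀ j : ℕ, z (j + 1) =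
      proj D (z j - α • (P (z j) + q + (ContinuousLinearMap.adjoint H) (w (j + 1)))))
    (hv : ∀ j : ℕ, v (j + 1) = w (j + 1) + α • H (z (j + 1) - z j))
    (γ lam ν : ℝ) (hγ : 1/2 < γ) (hγ1 : γ < 1)
    (hlam : ‖P‖ ≤ lam) (hν : ‖H‖ ≤ ν) (hα0 : 0 < α)
    (hα : α ≤ (8 - 4/γ) / (Real.sqrt (lam^2 + 16*ν^2) + lam))
    :
    ∃ zbar ∈ recCone D, ∃ wbar ∈ polarCone K,
      Tendsto (fun j : ℕ => z (j + 1) - z j) atTop (𝓝 zbar) ∧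
      Tendsto (fun j : ℕ => w (j + 1) - w j) atTop (𝓝 wbar) ∧
      H zbar ∈ K ∧ P zbar = 0 ∧
      ⟪q, zbar⟫ = -(1/α) * ‖zbar‖^2 ∧
      sSup {r : ℝ | ∃ y ∈ D, r = ⟪y, -((ContinuousLinearMap.adjoint H) wbar)⟫}
          + ⟪g, wbar⟫ = -(1/α) * ‖wbar‖^2 := by
  obtain ⟨zbar, hzbar, wbar, hwbar, hzlim, hwlim, hHz, hPz, hqz, hlub⟩ :=
    stmt4_general ((ContinuousLinearMap.isPositive_iff' P).2 ⟨hPsa, hPpsd⟩) q H g hDne hDcl hDconv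
      hKne hKcl hKconv hKcone hw hz hv hα0 <| step_size_condition (by linarith) hγ1 (norm_nonneg P)
        (norm_nonneg H) hlam hν hα0 hα
  refine ⟨zbar, hzbar, wbar, hwbar, hzlim, hwlim, hHz, hPz, hqz, ?_⟩
  obtain ⟨y, hy⟩ := hDne
  rw [hlub.csSup_eq ⟨_, y, hy, rfl⟩, sub_add_cancel]
end
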